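/- Let f ∈ C⁰(G) be a nonzero eigenfunction of dSd* with eigenvalue ν, and let λ ∈ ℂ \ {0} satisfy λ² − cνλ + (cc'−1) = 0 (equivalently φ(λ) = ν, where φ(x) = (x + (cc'−1)x⁻¹)/c). Then W((1 − λS) d* f) = λ · (1 − λS) d* f; in particular, if (1 − λS) d* f ≠ 0 then λ is an eigenvalue of W with eigenvector (1 − λS) d* f = (d* − λ S d*) f. -/

import Mathlib

/-!
With `ψ = (1 - λS) d*f`, the relations `d d* = c'` and `dSd*f = νf` give `dψ = (c' - λν) f`. Hence
`(c d*d - 1) ψ = (c c' - 1 - cνλ) d*f + λ S d*f`, and the quadratic equation turns the first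
coefficient into `-λ²`. Applying `S`, with `S² = 1`, yields `λ d*f - λ² S d*f = λψ`.
-/

noncomputable section

open Finset

variable {V : Type*} [Fintype V] [DecidableEq V] (G : SimpleGraph V) [DecidableRel G.Adj]

/-- The flip operator `(Sψ)(e) = ψ(ē)` on `C¹(G)`. -/
def flipOp (ψ : G.Dart → ℂ) : G.Dart → ℂ := fun e => ψ e.symm

/-- The boundary operator `(dψ)(u) = Σ_{e : t(e)=u} conj(w(ē)) ψ(e)`. -/
def bdW (w : G.Dart → ℂ) (ψ : G.Dart → ℂ) : V → ℂ :=
  fun u => ∑ e ∈ Finset.univ.filter (fun e : G.Dart => e.snd = u),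
    (starRingEnd ℂ) (w e.symm) * ψ e

/-- The coboundary operator `(d*f)(e) = f(t(e)) m_V(t(e)) w(ē) / m_A(e)`, adjoint of `d`
with respect to the weighted inner products. -/
def cobdW (w : G.Dart → ℂ) (mV : V → ℝ) (mA : G.Dart → ℝ) (f : V → ℂ) : G.Dart → ℂ :=
  fun e => f e.snd * (mV e.snd : ℂ) * w e.symm / (mA e : ℂ)

/-- The operator `W = S(c d*d − 1)` on `C¹(G)`. -/
def Wop (w : G.Dart → ℂ) (mV : V → ℝ) (mA : G.Dart → ℝ) (c : ℂ) (ψ : G.Dart → ℂ) :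
    G.Dart → ℂ :=
  flipOp G (fun e => c * cobdW G w mV mA (bdW G w ψ) e - ψ e)

/-- The identity `d d* = c'·1`, which is the constancy assumption on `c'`. -/
lemma bdW_cobdW (w : G.Dart → ℂ) (mV : V → ℝ) (mA : G.Dart → ℝ) (c' : ℝ)
    (hc' : ∀ u : V, ∑ e ∈ Finset.univ.filter (fun e : G.Dart => e.snd = u),
      mV u * Complex.normSq (w e.symm) / mA e = c')
    (f : V → ℂ) (u : V) :
    bdW G w (cobdW G w mV mA f) u = c' * f u := by
  rw [← hc' u]
  push_cast
  rw [Finset.sum_mul]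
  refine Finset.sum_congr rfl fun e he => ?_
  obtain rfl : e.snd = u := (Finset.mem_filter.mp he).2
  rw [Complex.normSq_eq_conj_mul_self]
  simp only [cobdW]
  ring

lemma bdW_sub_mul (w : G.Dart → ℂ) (ψ χ : G.Dart → ℂ) (a : ℂ) (u : V) :
    bdW G w (fun e => ψ e - a * χ e) u = bdW G w ψ u - a * bdW G w χ u := by
  simp only [bdW, Finset.mul_sum, ← Finset.sum_sub_distrib]
  exact Finset.sum_congr rfl fun e _ => by ring

/-- If `f ≠ 0` is an eigenfunction of `dSd*` with eigenvalue `ν` and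
`λ ≠ 0` satisfies `λ² − cνλ + (cc'−1) = 0` (i.e. `φ(λ) = ν`), then
`W((1 − λS) d* f) = λ · (1 − λS) d* f`; in particular, if `(1 − λS) d* f ≠ 0` then `λ`
is an eigenvalue of `W` with eigenvector `(1 − λS) d* f = (d* − λ S d*) f`. -/
theorem statement6 (hG : G.Connected) (w : G.Dart → ℂ) (mV : V → ℝ) (mA : G.Dart → ℝ)
    (hmVpos : ∀ u : V, 0 < mV u) (hmApos : ∀ e : G.Dart, 0 < mA e)
    (c : ℂ) (c' : ℝ)
    (hc' : ∀ u : V, ∑ e ∈ Finset.univ.filter (fun e : G.Dart => e.snd = u),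
      mV u * Complex.normSq (w e.symm) / mA e = c')
    (f : V → ℂ) (hf : f ≠ 0) (ν : ℂ)
    (heig : bdW G w (flipOp G (cobdW G w mV mA f)) = fun u => ν * f u)
    (lam : ℂ) (hlam : lam ≠ 0)
    (hquad : lam ^ 2 - c * ν * lam + (c * (c' : ℂ) - 1) = 0) :
    Wop G w mV mA c (fun e => cobdW G w mV mA f e - lam * cobdW G w mV mA f e.symm)
      = fun e => lam * (cobdW G w mV mA f e - lam * cobdW G w mV mA f e.symm) := by
  have hd (u : V) :
      bdW G w (fun e => cobdW G w mV mA f e - lam * cobdW G w mV mA f e.symm) u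
        = (c' - lam * ν) * f u := by
    have h := bdW_sub_mul G w (cobdW G w mV mA f) (flipOp G (cobdW G w mV mA f)) lam u
    rw [bdW_cobdW G w mV mA c' hc', heig] at h
    exact h.trans (by ring)
  funext e
  have hcob : cobdW G w mV mA
        (bdW G w (fun e => cobdW G w mV mA f e - lam * cobdW G w mV mA f e.symm)) e.symm
      = (c' - lam * ν) * cobdW G w mV mA f e.symm := by
    simp only [cobdW] at hd ⊢
    rw [hd]
    ring
  simp only [Wop, flipOp, hcob, SimpleGraph.Dart.symm_symm]
  linear_combination cobdW G w mV mA f e.symm * hquad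

end
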